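/- arXiv:2410.07960 — 3 statements merged into one kernel-verified Lean document; each statement's English description precedes it below -/
import Mathlib

section
/- For parameters β, α, γ, the operators T_i = -β + ((α+β+γ)x_i + γ x_{i+1} + 1 + (β+γ)(α+γ) x_i x_{i+1})∂_i on ℂ[x_1, x_2, x_3] satisfy the braid relation T_1 T_2 T_1 = T_2 T_1 T_2. -/
open MvPolynomial

theorem braid_lin {R : Type*} [CommRing R] (c d1 d2 d3 A1 A2 A3 B1 B2 Q1 Q2 Q3 P1 P2 : R)
    (f f1 f2 f12 f21 f121 : R)
    (t g g1 h h1 h2 h12 t' g' g2' h' h1' h2' h21' : R)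
    (I1 : A1*A2*d3 - d2*A3*B1 - d1*A2*A3 = 0)
    (I2 : A1*A2*d3 - d1*A3*B2 - d2*A1*A3 = 0)
    (J1 : A1*B1 - Q1*P1 = c*d1^2) (J2 : A2*B2 - Q2*P2 = c*d2^2)
    (e1 : d1*t = A1*g + Q1*g1) (e2 : d2*g = A2*h + Q2*h2) (e3 : d3*g1 = A3*h1 + Q3*h12)
    (e4 : d1*h = A1*f + Q1*f1) (e5 : -d1*h1 = B1*f1 + P1*f) (e6 : d3*h2 = A3*f2 + Q3*f21)
    (e7 : d2*h12 = A2*f12 + Q2*f121)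
    (k1 : d2*t' = A2*g' + Q2*g2') (k2 : d1*g' = A1*h' + Q1*h1') (k3 : d3*g2' = A3*h2' + Q3*h21')
    (k4 : d2*h' = A2*f + Q2*f2) (k5 : -d2*h2' = B2*f2 + P2*f) (k6 : d3*h1' = A3*f1 + Q3*f12)
    (k7 : d1*h21' = A1*f21 + Q1*f121) :
    d1^2*d2^2*d3*(t-t') = 0 := by
  have L : d1^2*d2*d3*t = A1*A2*d3*(A1*f + Q1*f1) - Q1*d2*A3*(B1*f1 + P1*f)
      + A1*Q2*d1*(A3*f2 + Q3*f21) + Q1*Q3*d1*(A2*f12 + Q2*f121) := by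
    linear_combination d1*d2*d3*e1 + A1*d3*d1*e2 + Q1*d2*d1*e3 + A1*A2*d3*e4 - Q1*d2*A3*e5
      + A1*Q2*d1*e6 + Q1*Q3*d1*e7
  have K : d1*d2^2*d3*t' = A2*A1*d3*(A2*f + Q2*f2) - Q2*d1*A3*(B2*f2 + P2*f)
      + A2*Q1*d2*(A3*f1 + Q3*f12) + Q2*Q3*d2*(A1*f21 + Q1*f121) := by
    linear_combination d1*d2*d3*k1 + A2*d3*d2*k2 + Q2*d1*d2*k3 + A2*A1*d3*k4 - Q2*d1*A3*k5
      + A2*Q1*d2*k6 + Q2*Q3*d2*k7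
  linear_combination d2*L - d1*K + f*(d2*A1*I1 - d1*A2*I2 + A3*d2^2*J1 - A3*d1^2*J2)
    + f1*Q1*d2*I1 - f2*Q2*d1*I2

theorem braid_aux {R : Type*} [CommRing R] (α β γ x y z f f1 f2 f12 f21 f121 : R)
    (t g g1 h h1 h2 h12 t' g' g2' h' h1' h2' h21' : R)
    (e1 : (y-x)*t = (-β*(y-x)-((α+β+γ)*x+γ*y+1+(β+γ)*(α+γ)*(x*y)))*g + ((α+β+γ)*x+γ*y+1+(β+γ)*(α+γ)*(x*y))*g1)
    (e2 : (z-y)*g = (-β*(z-y)-((α+β+γ)*y+γ*z+1+(β+γ)*(α+γ)*(y*z)))*h + ((α+β+γ)*y+γ*z+1+(β+γ)*(α+γ)*(y*z))*h2)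
    (e3 : (z-x)*g1 = (-β*(z-x)-((α+β+γ)*x+γ*z+1+(β+γ)*(α+γ)*(x*z)))*h1 + ((α+β+γ)*x+γ*z+1+(β+γ)*(α+γ)*(x*z))*h12)
    (e4 : (y-x)*h = (-β*(y-x)-((α+β+γ)*x+γ*y+1+(β+γ)*(α+γ)*(x*y)))*f + ((α+β+γ)*x+γ*y+1+(β+γ)*(α+γ)*(x*y))*f1)
    (e5 : (x-y)*h1 = (-β*(x-y)-((α+β+γ)*y+γ*x+1+(β+γ)*(α+γ)*(y*x)))*f1 + ((α+β+γ)*y+γ*x+1+(β+γ)*(α+γ)*(y*x))*f)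
    (e6 : (z-x)*h2 = (-β*(z-x)-((α+β+γ)*x+γ*z+1+(β+γ)*(α+γ)*(x*z)))*f2 + ((α+β+γ)*x+γ*z+1+(β+γ)*(α+γ)*(x*z))*f21)
    (e7 : (z-y)*h12 = (-β*(z-y)-((α+β+γ)*y+γ*z+1+(β+γ)*(α+γ)*(y*z)))*f12 + ((α+β+γ)*y+γ*z+1+(β+γ)*(α+γ)*(y*z))*f121)
    (k1 : (z-y)*t' = (-β*(z-y)-((α+β+γ)*y+γ*z+1+(β+γ)*(α+γ)*(y*z)))*g' + ((α+β+γ)*y+γ*z+1+(β+γ)*(α+γ)*(y*z))*g2')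
    (k2 : (y-x)*g' = (-β*(y-x)-((α+β+γ)*x+γ*y+1+(β+γ)*(α+γ)*(x*y)))*h' + ((α+β+γ)*x+γ*y+1+(β+γ)*(α+γ)*(x*y))*h1')
    (k3 : (z-x)*g2' = (-β*(z-x)-((α+β+γ)*x+γ*z+1+(β+γ)*(α+γ)*(x*z)))*h2' + ((α+β+γ)*x+γ*z+1+(β+γ)*(α+γ)*(x*z))*h21')
    (k4 : (z-y)*h' = (-β*(z-y)-((α+β+γ)*y+γ*z+1+(β+γ)*(α+γ)*(y*z)))*f + ((α+β+γ)*y+γ*z+1+(β+γ)*(α+γ)*(y*z))*f2)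
    (k5 : (y-z)*h2' = (-β*(y-z)-((α+β+γ)*z+γ*y+1+(β+γ)*(α+γ)*(z*y)))*f2 + ((α+β+γ)*z+γ*y+1+(β+γ)*(α+γ)*(z*y))*f)
    (k6 : (z-x)*h1' = (-β*(z-x)-((α+β+γ)*x+γ*z+1+(β+γ)*(α+γ)*(x*z)))*f1 + ((α+β+γ)*x+γ*z+1+(β+γ)*(α+γ)*(x*z))*f12)
    (k7 : (y-x)*h21' = (-β*(y-x)-((α+β+γ)*x+γ*y+1+(β+γ)*(α+γ)*(x*y)))*f21 + ((α+β+γ)*x+γ*y+1+(β+γ)*(α+γ)*(x*y))*f121) :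
    (y-x)^2*(z-y)^2*(z-x)*(t-t') = 0 := by
  refine braid_lin (α*β) (y-x)
    (z-y)
    (z-x)
    (-β*(y-x)-((α+β+γ)*x+γ*y+1+(β+γ)*(α+γ)*(x*y)))
    (-β*(z-y)-((α+β+γ)*y+γ*z+1+(β+γ)*(α+γ)*(y*z)))
    (-β*(z-x)-((α+β+γ)*x+γ*z+1+(β+γ)*(α+γ)*(x*z)))
    (-β*(x-y)-((α+β+γ)*y+γ*x+1+(β+γ)*(α+γ)*(y*x)))
    (-β*(y-z)-((α+β+γ)*z+γ*y+1+(β+γ)*(α+γ)*(z*y)))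
    ((α+β+γ)*x+γ*y+1+(β+γ)*(α+γ)*(x*y))
    ((α+β+γ)*y+γ*z+1+(β+γ)*(α+γ)*(y*z))
    ((α+β+γ)*x+γ*z+1+(β+γ)*(α+γ)*(x*z))
    ((α+β+γ)*y+γ*x+1+(β+γ)*(α+γ)*(y*x))
    ((α+β+γ)*z+γ*y+1+(β+γ)*(α+γ)*(z*y))
    f f1 f2 f12 f21 f121 t g g1 h h1 h2 h12 t' g' g2' h' h1' h2' h21' ?_ ?_ ?_ ?_
    e1 e2 e3 e4 ?_ e6 e7 k1 k2 k3 k4 ?_ k6 k7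
  · ring
  · ring
  · ring
  · ring
  · rw [neg_sub]; exact e5
  · rw [neg_sub]; exact k5

/-- The operators `T_i = -β + ((α+β+γ)x_i + γ x_{i+1} + 1 + (β+γ)(α+γ) x_i x_{i+1})∂_i`
on `ℂ[x_1, x_2, x_3]` satisfy the braid relation `T_1 T_2 T_1 = T_2 T_1 T_2`. -/
theorem hecke_braid_relation (α β γ : ℂ)
    (D₁ D₂ T₁ T₂ : MvPolynomial (Fin 3) ℂ → MvPolynomial (Fin 3) ℂ)
    (hD₁ : ∀ f, (X 1 - X 0) * D₁ f = rename (Equiv.swap 0 1) f - f)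
    (hD₂ : ∀ f, (X 2 - X 1) * D₂ f = rename (Equiv.swap 1 2) f - f)
    (hT₁ : ∀ f, T₁ f = C (-β) * f +
      (C (α + β + γ) * X 0 + C γ * X 1 + 1 + C ((β + γ) * (α + γ)) * (X 0 * X 1)) * D₁ f)
    (hT₂ : ∀ f, T₂ f = C (-β) * f +
      (C (α + β + γ) * X 1 + C γ * X 2 + 1 + C ((β + γ) * (α + γ)) * (X 1 * X 2)) * D₂ f) :
    ∀ f, T₁ (T₂ (T₁ f)) = T₂ (T₁ (T₂ f)) := by
  intro f
  set s₁ : MvPolynomial (Fin 3) ℂ →ₐ[ℂ] MvPolynomial (Fin 3) ℂ := rename (Equiv.swap 0 1) with hs₁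
  set s₂ : MvPolynomial (Fin 3) ℂ →ₐ[ℂ] MvPolynomial (Fin 3) ℂ := rename (Equiv.swap 1 2) with hs₂
  have c1 : ∀ a, s₁ (C a) = C a := fun a => by simp [hs₁]
  have c2 : ∀ a, s₂ (C a) = C a := fun a => by simp [hs₂]
  have x10 : s₁ (X 0) = X 1 := by simp [hs₁]
  have x11 : s₁ (X 1) = X 0 := by simp [hs₁]
  have x12 : s₁ (X 2) = X 2 := by
    rw [hs₁, rename_X]; congr 1
  have x20 : s₂ (X 0) = X 0 := by
    rw [hs₂, rename_X]; congr 1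
  have x21 : s₂ (X 1) = X 2 := by simp [hs₂]
  have x22 : s₂ (X 2) = X 1 := by simp [hs₂]
  have br : s₂ (s₁ (s₂ f)) = s₁ (s₂ (s₁ f)) := by
    simp only [hs₁, hs₂, rename_rename]
    congr 2
    funext i
    fin_cases i <;> rfl
  have r1 : ∀ f, (X 1-X 0)*T₁ f = (-C β*(X 1-X 0)-((C α+C β+C γ)*X 0+C γ*X 1+1+(C β+C γ)*(C α+C γ)*(X 0*X 1)))*f + ((C α+C β+C γ)*X 0+C γ*X 1+1+(C β+C γ)*(C α+C γ)*(X 0*X 1))*s₁ f := by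
    intro f
    rw [hT₁]
    simp only [map_add, map_mul, map_neg]
    linear_combination ((C α+C β+C γ)*X 0+C γ*X 1+1+(C β+C γ)*(C α+C γ)*(X 0*X 1)) * hD₁ f
  have r2 : ∀ f, (X 2-X 1)*T₂ f = (-C β*(X 2-X 1)-((C α+C β+C γ)*X 1+C γ*X 2+1+(C β+C γ)*(C α+C γ)*(X 1*X 2)))*f + ((C α+C β+C γ)*X 1+C γ*X 2+1+(C β+C γ)*(C α+C γ)*(X 1*X 2))*s₂ f := by
    intro f
    rw [hT₂]
    simp only [map_add, map_mul, map_neg]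
    linear_combination ((C α+C β+C γ)*X 1+C γ*X 2+1+(C β+C γ)*(C α+C γ)*(X 1*X 2)) * hD₂ f
  have q1 := fun f => congrArg s₁ (r1 f)
  have q2 := fun f => congrArg s₂ (r2 f)
  have q12 := fun f => congrArg s₁ (r2 f)
  have q21 := fun f => congrArg s₂ (r1 f)
  have w12 := fun f => congrArg s₁ (congrArg s₂ (r1 f))
  have w21 := fun f => congrArg s₂ (congrArg s₁ (r2 f))
  have v1 : ∀ f, s₁ (s₁ f) = f := fun f => by
    simp only [hs₁, rename_rename]
    convert rename_id_apply f using 2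
    congr 1
    funext i
    simp
  have v2 : ∀ f, s₂ (s₂ f) = f := fun f => by
    simp only [hs₂, rename_rename]
    convert rename_id_apply f using 2
    congr 1
    funext i
    simp
  simp only [map_add, map_sub, map_mul, map_neg, map_one, c1, c2, x10, x11, x12, x20, x21, x22, v1, v2] at q1 q2 q12 q21 w12 w21
  have w21' := w21 f
  rw [br] at w21'
  have key := braid_aux (C α) (C β) (C γ) (X 0) (X 1) (X 2) f (s₁ f) (s₂ f) (s₁ (s₂ f)) (s₂ (s₁ f))
    (s₁ (s₂ (s₁ f))) _ _ _ _ _ _ _ _ _ _ _ _ _ _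
    (r1 (T₂ (T₁ f))) (r2 (T₁ f)) (q12 (T₁ f)) (r1 f) (q1 f) (q21 f) (w12 f)
    (r2 (T₁ (T₂ f))) (r1 (T₂ f)) (q21 (T₂ f)) (r2 f) (q2 f) (q12 f) w21'
  have ne : ∀ i j : Fin 3, i ≠ j → (X i - X j : MvPolynomial (Fin 3) ℂ) ≠ 0 := fun i j hij h =>
    hij (X_injective (sub_eq_zero.mp h))
  have n1 := ne 1 0 (by decide)
  have n2 := ne 2 1 (by decide)
  have n3 := ne 2 0 (by decide)
  rcases mul_eq_zero.mp key with h | h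
  · exact absurd h (mul_ne_zero (mul_ne_zero (pow_ne_zero _ n1) (pow_ne_zero _ n2)) n3)
  · exact sub_eq_zero.mp h
end

section
/- For parameters (a, b, c, h, e) the generalized divided difference operators T_i = a + (b x_i + c x_{i+1} + h + e x_i x_{i+1})∂_i on ℂ[x_1, x_2, x_3] satisfy the braid relation T_1 T_2 T_1 = T_2 T_1 T_2 if (a+b)(a-c) + he = 0. -/
open MvPolynomial

theorem braid_aux_s7 {R : Type*} [CommRing R] [IsDomain R] (a b c h e x y z : R)
    (hb : (a + b) * (a - c) + h * e = 0)
    (A B : R → R → R)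
    (hA : ∀ p q, A p q = b * p + c * q + h + e * (p * q))
    (hB : ∀ p q, B p q = a * (q - p) - A p q)
    (hxy : y - x ≠ 0) (hyz : z - y ≠ 0) (hxz : z - x ≠ 0)
    (f f1 f2 f12 f21 f121 u su tu stu v sv w u' su' tu' stu' v' sv' w' : R)
    (Eu : (y - x) * u = A x y * f1 + B x y * f)
    (Esu : (x - y) * su = A y x * f + B y x * f1)
    (Etu : (z - x) * tu = A x z * f21 + B x z * f2)
    (Estu : (z - y) * stu = A y z * f121 + B y z * f12)
    (Ev : (z - y) * v = A y z * tu + B y z * u)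
    (Esv : (z - x) * sv = A x z * stu + B x z * su)
    (Ew : (y - x) * w = A x y * sv + B x y * v)
    (Eu' : (z - y) * u' = A y z * f2 + B y z * f)
    (Esu' : (y - z) * su' = A z y * f + B z y * f2)
    (Etu' : (z - x) * tu' = A x z * f12 + B x z * f1)
    (Estu' : (y - x) * stu' = A x y * f121 + B x y * f21)
    (Ev' : (y - x) * v' = A x y * tu' + B x y * u')
    (Esv' : (z - x) * sv' = A x z * stu' + B x z * su')
    (Ew' : (z - y) * w' = A y z * sv' + B y z * v') : w = w' := by
  have h1 : ((y - x) ^ 2 * (z - y) ^ 2 * (z - x)) * w =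
      (z - y) ^ 2 * (y - x) * A x y * A x z * stu - (z - y) ^ 2 * A x y * B x z * (A y x * f + B y x * f1)
      + (y - x) * (z - y) * B x y * A y z * (A x z * f21 + B x z * f2)
      + (z - y) * (z - x) * B x y * B y z * (A x y * f1 + B x y * f) := by
    linear_combination (y - x) * (z - y) ^ 2 * (z - x) * Ew + (y - x) * (z - y) ^ 2 * A x y * Esv
      + (y - x) * (z - y) * (z - x) * B x y * Ev
      - (z - y) ^ 2 * A x y * B x z * Esu + (y - x) * (z - y) * B x y * A y z * Etu
      + (z - y) * (z - x) * B x y * B y z * Eu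
  have h2 : ((y - x) ^ 2 * (z - y) ^ 2 * (z - x)) * w' =
      (y - x) ^ 2 * (z - y) * A y z * A x z * stu' - (y - x) ^ 2 * A y z * B x z * (A z y * f + B z y * f2)
      + (z - y) * (y - x) * B y z * A x y * (A x z * f12 + B x z * f1)
      + (y - x) * (z - x) * B y z * B x y * (A y z * f2 + B y z * f) := by
    linear_combination (z - y) * (y - x) ^ 2 * (z - x) * Ew' + (z - y) * (y - x) ^ 2 * A y z * Esv'
      + (z - y) * (y - x) * (z - x) * B y z * Ev'
      - (y - x) ^ 2 * A y z * B x z * Esu' + (z - y) * (y - x) * B y z * A x y * Etu'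
      + (y - x) * (z - x) * B y z * B x y * Eu'
  have hD : (y - x) ^ 2 * (z - y) ^ 2 * (z - x) ≠ 0 :=
    mul_ne_zero (mul_ne_zero (pow_ne_zero _ hxy) (pow_ne_zero _ hyz)) hxz
  apply mul_left_cancel₀ hD
  -- the two key identities
  have k : (2 * a + b - c) * B x z * (y - x) * (z - y) - B x y * B x z * (z - y)
      - B y z * B x z * (y - x) + B x y * B y z * (z - x) = 0 := by
    simp only [hB, hA]
    linear_combination (y - x) * (z - y) * (z - x) * hb
  have r1 : A x y = a * (y - x) - B x y := by rw [hB]; ring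
  have r2 : A y z = a * (z - y) - B y z := by rw [hB]; ring
  have r3 : A y x = (a + b - c) * (y - x) - B x y := by simp only [hB, hA]; ring
  have r4 : A z y = (a + b - c) * (z - y) - B y z := by simp only [hB, hA]; ring
  have r5 : B y x = B x y - (2 * a + b - c) * (y - x) := by simp only [hB, hA]; ring
  have r6 : B z y = B y z - (2 * a + b - c) * (z - y) := by simp only [hB, hA]; ring
  rw [h1, h2, r3, r4, r5, r6]
  rw [r2] at Estu
  rw [r1] at Estu'
  rw [r1, r2]
  linear_combination
    (z - y) * (y - x) * (a * (y - x) - B x y) * A x z * Estu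
    - (y - x) * (z - y) * (a * (z - y) - B y z) * A x z * Estu'
    + ((B x y * (z - y) - B y z * (y - x)) * f + (z - y) * (a * (y - x) - B x y) * f1
      - (y - x) * (a * (z - y) - B y z) * f2) * k

/-- The generalized divided difference operators
`T_i = a + (b x_i + c x_{i+1} + h + e x_i x_{i+1})∂_i` on `ℂ[x_1, x_2, x_3]` satisfy
the braid relation `T_1 T_2 T_1 = T_2 T_1 T_2` if `(a+b)(a-c) + he = 0`. -/
theorem generalized_braid_relation (a b c h e : ℂ)
    (hbraid : (a + b) * (a - c) + h * e = 0)
    (D₁ D₂ T₁ T₂ : MvPolynomial (Fin 3) ℂ → MvPolynomial (Fin 3) ℂ)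
    (hD₁ : ∀ f, (X 1 - X 0) * D₁ f = rename (Equiv.swap 0 1) f - f)
    (hD₂ : ∀ f, (X 2 - X 1) * D₂ f = rename (Equiv.swap 1 2) f - f)
    (hT₁ : ∀ f, T₁ f = C a * f +
      (C b * X 0 + C c * X 1 + C h + C e * (X 0 * X 1)) * D₁ f)
    (hT₂ : ∀ f, T₂ f = C a * f +
      (C b * X 1 + C c * X 2 + C h + C e * (X 1 * X 2)) * D₂ f) :
    ∀ f, T₁ (T₂ (T₁ f)) = T₂ (T₁ (T₂ f)) := by
  intro f
  have e0 : (Equiv.swap (0 : Fin 3) 1) 2 = 2 := by decide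
  have e1 : (Equiv.swap (1 : Fin 3) 2) 0 = 0 := by decide
  have hX : ∀ i j : Fin 3, i ≠ j → (X i - X j : MvPolynomial (Fin 3) ℂ) ≠ 0 := by
    intro i j hij h0
    exact hij (X_injective (sub_eq_zero.mp h0))
  have hbr : ((C a + C b) * (C a - C c) + C h * C e : MvPolynomial (Fin 3) ℂ) = 0 := by
    simp only [← C_add, ← C_sub, ← C_mul, hbraid, C_0]
  obtain ⟨A, hA⟩ : ∃ A : MvPolynomial (Fin 3) ℂ → MvPolynomial (Fin 3) ℂ → MvPolynomial (Fin 3) ℂ,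
      ∀ p q, A p q = C b * p + C c * q + C h + C e * (p * q) := ⟨_, fun _ _ => rfl⟩
  obtain ⟨B, hB⟩ : ∃ B : MvPolynomial (Fin 3) ℂ → MvPolynomial (Fin 3) ℂ → MvPolynomial (Fin 3) ℂ,
      ∀ p q, B p q = C a * (q - p) - A p q := ⟨_, fun _ _ => rfl⟩
  have rA : ∀ (g : Fin 3 → Fin 3) p q, rename g (A p q) = A (rename g p) (rename g q) := by
    intro g p q; simp [hA]
  have rB : ∀ (g : Fin 3 → Fin 3) p q, rename g (B p q) = B (rename g p) (rename g q) := by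
    intro g p q; simp [hB, rA]
  have E1 : ∀ g, (X 1 - X 0) * T₁ g = A (X 0) (X 1) * rename (Equiv.swap 0 1) g
      + B (X 0) (X 1) * g := by
    intro g; rw [hT₁, hB, hA]
    linear_combination (C b * X 0 + C c * X 1 + C h + C e * (X 0 * X 1)) * hD₁ g
  have E2 : ∀ g, (X 2 - X 1) * T₂ g = A (X 1) (X 2) * rename (Equiv.swap 1 2) g
      + B (X 1) (X 2) * g := by
    intro g; rw [hT₂, hB, hA]
    linear_combination (C b * X 1 + C c * X 2 + C h + C e * (X 1 * X 2)) * hD₂ g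
  have i1 : ∀ g : MvPolynomial (Fin 3) ℂ,
      rename (Equiv.swap (0 : Fin 3) 1) (rename (Equiv.swap (0 : Fin 3) 1) g) = g := by
    intro g; rw [rename_rename]
    convert rename_id_apply g using 2
    congr 1; funext i; simp
  have i2 : ∀ g : MvPolynomial (Fin 3) ℂ,
      rename (Equiv.swap (1 : Fin 3) 2) (rename (Equiv.swap (1 : Fin 3) 2) g) = g := by
    intro g; rw [rename_rename]
    convert rename_id_apply g using 2
    congr 1; funext i; simp
  have br : ∀ g : MvPolynomial (Fin 3) ℂ,
      rename (Equiv.swap (1 : Fin 3) 2) (rename (Equiv.swap (0 : Fin 3) 1)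
        (rename (Equiv.swap (1 : Fin 3) 2) g)) =
      rename (Equiv.swap (0 : Fin 3) 1) (rename (Equiv.swap (1 : Fin 3) 2)
        (rename (Equiv.swap (0 : Fin 3) 1) g)) := by
    intro g; simp only [rename_rename]
    congr 2; funext i; revert i; decide
  have S1 : ∀ p q : MvPolynomial (Fin 3) ℂ, p = q →
    rename (Equiv.swap (0 : Fin 3) 1) p = rename (Equiv.swap (0 : Fin 3) 1) q := by
    rintro p _ rfl; rfl
  have S2 : ∀ p q : MvPolynomial (Fin 3) ℂ, p = q →
    rename (Equiv.swap (1 : Fin 3) 2) p = rename (Equiv.swap (1 : Fin 3) 2) q := by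
    rintro p _ rfl; rfl
  have F1 : ∀ g, _ := fun g => S1 _ _ (E1 g)
  have F2 : ∀ g, _ := fun g => S2 _ _ (E1 g)
  have F12 : ∀ g, _ := fun g => S1 _ _ (F2 g)
  have G2 : ∀ g, _ := fun g => S2 _ _ (E2 g)
  have G1 : ∀ g, _ := fun g => S1 _ _ (E2 g)
  have G21 : ∀ g, _ := fun g => S2 _ _ (G1 g)
  simp only [map_add, map_sub, map_mul, rA, rB, rename_X, Equiv.swap_apply_left,
    Equiv.swap_apply_right, e0, e1, i1, i2, br] at F1 F2 F12 G1 G2 G21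
  exact braid_aux_s7 (C a) (C b) (C c) (C h) (C e) (X 0) (X 1) (X 2) hbr A B hA hB
    (hX _ _ (by decide)) (hX _ _ (by decide)) (hX _ _ (by decide))
    _ _ _ _ _ _ _ _ _ _ _ _ _ _ _ _ _ _ _ _
    (E1 f) (F1 f) (F2 f) (F12 f) (E2 (T₁ f)) (G1 (T₁ f)) (E1 (T₂ (T₁ f)))
    (E2 f) (G2 f) (G1 f) (G21 f) (E1 (T₂ f)) (F2 (T₂ f)) (E2 (T₁ (T₂ f)))
end

section
/- There exist a permutation w in S_4 and a choice of evaluation of parameters such that the Kirillov polynomial KN_w^{(β,α,γ)}(x; 0) := T_{i_1} ⋯ T_{i_ℓ}(x_1³ x_2² x_3), computed via a reduced word for w using the operators T_i = -β + ((α+β+γ)x_i + γ x_{i+1} + 1 + (β+γ)(α+γ)x_i x_{i+1})∂_i, has a negative coefficient as a polynomial in ℤ[β, α, γ][x_1, x_2, x_3, x_4]; specifically, this holds for the permutation w = (1 3 2 4) in cycle notation. -/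
open MvPolynomial

namespace Kir

abbrev R := MvPolynomial (Fin 7) ℤ

structure Tm where
  c : ℤ
  b : ℕ
  g : ℕ
  p : ℕ
  q : ℕ
  r : ℕ
  s : ℕ

noncomputable def ev (t : Tm) : R :=
  C t.c * X 0 ^ t.b * X 2 ^ t.g * X 3 ^ t.p * X 4 ^ t.q * X 5 ^ t.r * X 6 ^ t.s

noncomputable def evl (l : List Tm) : R := (l.map ev).sum

def Tm.mul (t u : Tm) : Tm :=
  ⟨t.c * u.c, t.b + u.b, t.g + u.g, t.p + u.p, t.q + u.q, t.r + u.r, t.s + u.s⟩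

lemma ev_mul (t u : Tm) : ev (t.mul u) = ev t * ev u := by
  simp only [ev, Tm.mul, C_mul, pow_add]; ring

lemma evl_nil : evl [] = 0 := rfl
lemma evl_cons (t : Tm) (l : List Tm) : evl (t :: l) = ev t + evl l := by simp [evl]
lemma evl_append (l m : List Tm) : evl (l ++ m) = evl l + evl m := by simp [evl]

def mulL (l m : List Tm) : List Tm := l.flatMap fun t => m.map fun u => t.mul u

lemma evl_map_mul (t : Tm) (m : List Tm) : evl (m.map fun u => t.mul u) = ev t * evl m := by
  induction m with
  | nil => simp [evl]
  | cons a m ih => rw [List.map_cons, evl_cons, ih, evl_cons, ev_mul]; ring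

lemma evl_mulL (l m : List Tm) : evl (mulL l m) = evl l * evl m := by
  induction l with
  | nil => simp [evl, mulL]
  | cons a l ih =>
    have : mulL (a :: l) m = (m.map fun u => a.mul u) ++ mulL l m := by simp [mulL]
    rw [this, evl_append, ih, evl_map_mul, evl_cons]; ring

def dd (a b : ℕ) : List (ℤ × ℕ × ℕ) :=
  if b ≤ a then (List.range (a - b)).map (fun t => (1, b + t, b + (a - b - 1 - t)))
  else (List.range (b - a)).map (fun t => (-1, a + t, a + (b - a - 1 - t)))

noncomputable def dv (x y : R) (l : List (ℤ × ℕ × ℕ)) : R :=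
  (l.map fun e => C e.1 * x ^ e.2.1 * y ^ e.2.2).sum

lemma geo (x y : R) (n : ℕ) :
    (y - x) * ((List.range n).map fun t => x ^ t * y ^ (n - 1 - t)).sum = y ^ n - x ^ n := by
  have h := (Commute.all x y).geom_sum₂_mul n
  have e : ((List.range n).map fun t => x ^ t * y ^ (n - 1 - t)).sum
      = ∑ i ∈ Finset.range n, x ^ i * y ^ (n - 1 - i) := rfl
  rw [e]
  linear_combination -h

lemma dd_spec (x y : R) (a b : ℕ) :
    (y - x) * dv x y (dd a b) = y ^ a * x ^ b - x ^ a * y ^ b := by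
  unfold dd
  split_ifs with h
  · obtain ⟨n, rfl⟩ := Nat.exists_eq_add_of_le h
    have e : dv x y ((List.range (b + n - b)).map
        (fun t => ((1 : ℤ), b + t, b + (b + n - b - 1 - t))))
        = (x ^ b * y ^ b) * ((List.range n).map fun t => x ^ t * y ^ (n - 1 - t)).sum := by
      rw [← List.sum_map_mul_left]
      simp only [dv, List.map_map, Nat.add_sub_cancel_left]
      congr 1
      apply List.map_congr_left
      intro t _
      simp [pow_add]; ring
    rw [e, mul_left_comm, geo]; ring
  · obtain ⟨n, rfl⟩ := Nat.exists_eq_add_of_le (le_of_not_ge h)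
    have e : dv x y ((List.range (a + n - a)).map
        (fun t => ((-1 : ℤ), a + t, a + (a + n - a - 1 - t))))
        = (-(x ^ a * y ^ a)) * ((List.range n).map fun t => x ^ t * y ^ (n - 1 - t)).sum := by
      rw [← List.sum_map_mul_left]
      simp only [dv, List.map_map, Nat.add_sub_cancel_left]
      congr 1
      apply List.map_congr_left
      intro t _
      simp [pow_add]; ring
    rw [e, mul_left_comm, geo]; ring

def Dt (k : Fin 3) (t : Tm) : List Tm :=
  match k with
  | 0 => (dd t.p t.q).map fun e => ⟨t.c * e.1, t.b, t.g, e.2.1, e.2.2, t.r, t.s⟩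
  | 1 => (dd t.q t.r).map fun e => ⟨t.c * e.1, t.b, t.g, t.p, e.2.1, e.2.2, t.s⟩
  | 2 => (dd t.r t.s).map fun e => ⟨t.c * e.1, t.b, t.g, t.p, t.q, e.2.1, e.2.2⟩

def vi (k : Fin 3) : Fin 7 := match k with | 0 => 3 | 1 => 4 | 2 => 5
def vj (k : Fin 3) : Fin 7 := match k with | 0 => 4 | 1 => 5 | 2 => 6

lemma Dt_spec (k : Fin 3) (t : Tm) :
    (X (vj k) - X (vi k)) * evl (Dt k t) = rename (Equiv.swap (vi k) (vj k)) (ev t) - ev t := by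
  have sw : ∀ a b c : Fin 7, c ≠ a → c ≠ b → Equiv.swap a b c = c :=
    fun a b c h1 h2 => Equiv.swap_apply_of_ne_of_ne h1 h2
  match k with
  | 0 =>
    have e : evl (Dt 0 t) = (C t.c * X 0 ^ t.b * X 2 ^ t.g * X 5 ^ t.r * X 6 ^ t.s)
        * dv (X 3) (X 4) (dd t.p t.q) := by
      simp only [evl, dv, Dt, List.map_map, ← List.sum_map_mul_left]
      congr 1
      apply List.map_congr_left
      intro e _
      simp only [Function.comp, ev, C_mul]; ring
    have h := dd_spec (X 3) (X 4) t.p t.q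
    rw [e]
    simp only [ev, vi, vj, map_mul, map_pow, rename_C, rename_X, Equiv.swap_apply_left,
      Equiv.swap_apply_right]
    rw [sw 3 4 0 (by decide) (by decide), sw 3 4 2 (by decide) (by decide),
      sw 3 4 5 (by decide) (by decide), sw 3 4 6 (by decide) (by decide)]
    linear_combination (C t.c * X 0 ^ t.b * X 2 ^ t.g * X 5 ^ t.r * X 6 ^ t.s) * h
  | 1 =>
    have e : evl (Dt 1 t) = (C t.c * X 0 ^ t.b * X 2 ^ t.g * X 3 ^ t.p * X 6 ^ t.s)
        * dv (X 4) (X 5) (dd t.q t.r) := by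
      simp only [evl, dv, Dt, List.map_map, ← List.sum_map_mul_left]
      congr 1
      apply List.map_congr_left
      intro e _
      simp only [Function.comp, ev, C_mul]; ring
    have h := dd_spec (X 4) (X 5) t.q t.r
    rw [e]
    simp only [ev, vi, vj, map_mul, map_pow, rename_C, rename_X, Equiv.swap_apply_left,
      Equiv.swap_apply_right]
    rw [sw 4 5 0 (by decide) (by decide), sw 4 5 2 (by decide) (by decide),
      sw 4 5 3 (by decide) (by decide), sw 4 5 6 (by decide) (by decide)]
    linear_combination (C t.c * X 0 ^ t.b * X 2 ^ t.g * X 3 ^ t.p * X 6 ^ t.s) * h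
  | 2 =>
    have e : evl (Dt 2 t) = (C t.c * X 0 ^ t.b * X 2 ^ t.g * X 3 ^ t.p * X 4 ^ t.q)
        * dv (X 5) (X 6) (dd t.r t.s) := by
      simp only [evl, dv, Dt, List.map_map, ← List.sum_map_mul_left]
      congr 1
      apply List.map_congr_left
      intro e _
      simp only [Function.comp, ev, C_mul]; ring
    have h := dd_spec (X 5) (X 6) t.r t.s
    rw [e]
    simp only [ev, vi, vj, map_mul, map_pow, rename_C, rename_X, Equiv.swap_apply_left,
      Equiv.swap_apply_right]
    rw [sw 5 6 0 (by decide) (by decide), sw 5 6 2 (by decide) (by decide),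
      sw 5 6 3 (by decide) (by decide), sw 5 6 4 (by decide) (by decide)]
    linear_combination (C t.c * X 0 ^ t.b * X 2 ^ t.g * X 3 ^ t.p * X 4 ^ t.q) * h

lemma Dl_spec (k : Fin 3) (l : List Tm) :
    (X (vj k) - X (vi k)) * evl (l.flatMap (Dt k))
      = rename (Equiv.swap (vi k) (vj k)) (evl l) - evl l := by
  induction l with
  | nil => simp [evl]
  | cons a l ih =>
    rw [List.flatMap_cons, evl_append, mul_add, ih, Dt_spec, evl_cons, map_add]; ring

/-- the multiplier at alpha = 0 -/
def Ql (k : Fin 3) : List Tm :=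
  match k with
  | 0 => [⟨1,1,0,1,0,0,0⟩, ⟨1,0,1,1,0,0,0⟩, ⟨1,0,1,0,1,0,0⟩, ⟨1,0,0,0,0,0,0⟩,
          ⟨1,1,1,1,1,0,0⟩, ⟨1,0,2,1,1,0,0⟩]
  | 1 => [⟨1,1,0,0,1,0,0⟩, ⟨1,0,1,0,1,0,0⟩, ⟨1,0,1,0,0,1,0⟩, ⟨1,0,0,0,0,0,0⟩,
          ⟨1,1,1,0,1,1,0⟩, ⟨1,0,2,0,1,1,0⟩]
  | 2 => [⟨1,1,0,0,0,1,0⟩, ⟨1,0,1,0,0,1,0⟩, ⟨1,0,1,0,0,0,1⟩, ⟨1,0,0,0,0,0,0⟩,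
          ⟨1,1,1,0,0,1,1⟩, ⟨1,0,2,0,0,1,1⟩]

lemma Ql_spec (k : Fin 3) : evl (Ql k) = (X 0 + X 2) * X (vi k) + X 2 * X (vj k) + 1
    + (X 0 + X 2) * X 2 * (X (vi k) * X (vj k)) := by
  match k with
  | 0 => simp [evl, Ql, ev, vi, vj]; ring
  | 1 => simp [evl, Ql, ev, vi, vj]; ring
  | 2 => simp [evl, Ql, ev, vi, vj]; ring

def prune (l : List Tm) : List Tm := l.filter fun t => Nat.ble t.g 2

def Tl (k : Fin 3) (l : List Tm) : List Tm :=
  prune (mulL [⟨-1,1,0,0,0,0,0⟩] l ++ mulL (l.flatMap (Dt k)) (Ql k))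

def Tg (k : Fin 3) (l : List Tm) : List Tm := l.flatMap fun t => Tl k [t]

def Rel (f : R) (l : List Tm) : Prop := ∃ r s, f = evl l + X 1 * r + X 2 ^ 3 * s

lemma prune_spec (l : List Tm) : ∃ s, evl l = evl (prune l) + X 2 ^ 3 * s := by
  induction l with
  | nil => exact ⟨0, by simp [evl, prune]⟩
  | cons a l ih =>
    obtain ⟨s, hs⟩ := ih
    by_cases h : a.g ≤ 2
    · have : prune (a :: l) = a :: prune l := by simp [prune, h]
      exact ⟨s, by rw [this, evl_cons, evl_cons, hs]; ring⟩
    · have : prune (a :: l) = prune l := by simp [prune, h]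
      obtain ⟨n, hn⟩ := Nat.exists_eq_add_of_le (show 3 ≤ a.g by omega)
      refine ⟨s + C a.c * X 0 ^ a.b * X 2 ^ n * X 3 ^ a.p * X 4 ^ a.q * X 5 ^ a.r * X 6 ^ a.s, ?_⟩
      rw [this, evl_cons, hs, ev, hn]; ring

lemma step (k : Fin 3) (D T : R → R)
    (hD : ∀ f, (X (vj k) - X (vi k)) * D f = rename (Equiv.swap (vi k) (vj k)) f - f)
    (hT : ∀ f, T f = -X 0 * f + ((X 1 + X 0 + X 2) * X (vi k) + X 2 * X (vj k) + 1
      + (X 0 + X 2) * (X 1 + X 2) * (X (vi k) * X (vj k))) * D f)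
    (f : R) (l : List Tm) (h : Rel f l) : Rel (T f) (Tl k l) := by
  obtain ⟨r, s, rfl⟩ := h
  have hne : (X (vj k) - X (vi k) : R) ≠ 0 := by
    rw [sub_ne_zero]
    intro h
    have := X_injective h
    clear h hD hT
    revert this
    revert k
    decide
  have s1 : Equiv.swap (vi k) (vj k) 1 = 1 := by clear hD hT hne; revert k; decide
  have s2 : Equiv.swap (vi k) (vj k) 2 = 2 := by clear hD hT hne; revert k; decide
  have e : D (evl l + X 1 * r + X 2 ^ 3 * s)
      = evl (l.flatMap (Dt k)) + X 1 * D r + X 2 ^ 3 * D s := by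
    apply mul_left_cancel₀ hne
    rw [hD]
    simp only [map_add, map_mul, map_pow, rename_X, s1, s2]
    linear_combination -(Dl_spec k l) - X 1 * hD r - X 2 ^ 3 * hD s
  obtain ⟨s', hs'⟩ := prune_spec (mulL [⟨-1,1,0,0,0,0,0⟩] l ++ mulL (l.flatMap (Dt k)) (Ql k))
  rw [evl_append, evl_mulL, evl_mulL, Ql_spec] at hs'
  have hb : evl [⟨-1,1,0,0,0,0,0⟩] = -X 0 := by simp [evl, ev]
  rw [hb] at hs'
  set E := evl (l.flatMap (Dt k)) with hE
  set Q : R := (X 0 + X 2) * X (vi k) + X 2 * X (vj k) + 1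
    + (X 0 + X 2) * X 2 * (X (vi k) * X (vj k)) with hQ
  set Q1 : R := X (vi k) + (X 0 + X 2) * (X (vi k) * X (vj k)) with hQ1
  refine ⟨-X 0 * r + Q1 * (E + X 1 * D r + X 2 ^ 3 * D s) + Q * D r,
    s' - X 0 * s + Q * D s, ?_⟩
  rw [hT, e, Tl]
  linear_combination hs'

lemma Tl_spec (k : Fin 3) (l : List Tm) : ∃ s, evl [⟨-1,1,0,0,0,0,0⟩] * evl l
    + evl (l.flatMap (Dt k)) * evl (Ql k) = evl (Tl k l) + X 2 ^ 3 * s := by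
  obtain ⟨s, h⟩ := prune_spec (mulL [⟨-1,1,0,0,0,0,0⟩] l ++ mulL (l.flatMap (Dt k)) (Ql k))
  rw [evl_append, evl_mulL, evl_mulL] at h
  exact ⟨s, h⟩

lemma Tl_flat (k : Fin 3) (l : List Tm) : ∃ s, evl (Tl k l) = evl (Tg k l) + X 2 ^ 3 * s := by
  induction l with
  | nil => exact ⟨0, by simp [Tl, Tg, mulL, prune, evl]⟩
  | cons a l ih =>
    obtain ⟨s, hs⟩ := ih
    obtain ⟨s1, h1⟩ := Tl_spec k l
    obtain ⟨s2, h2⟩ := Tl_spec k [a]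
    obtain ⟨s3, h3⟩ := Tl_spec k (a :: l)
    have e : Tg k (a :: l) = Tl k [a] ++ Tg k l := by simp [Tg]
    refine ⟨s + s1 + s2 - s3, ?_⟩
    rw [e, evl_append]
    rw [List.flatMap_cons, evl_append, evl_cons a l] at h3
    rw [List.flatMap_cons, evl_append, evl_cons a [], List.flatMap_nil, evl_nil] at h2
    linear_combination hs - h3 + h1 + h2

lemma step' (k : Fin 3) (f : R) (l : List Tm) (h : Rel f (Tl k l)) : Rel f (Tg k l) := by
  obtain ⟨r, s, rfl⟩ := h
  obtain ⟨s', h'⟩ := Tl_flat k l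
  exact ⟨r, s + s', by rw [h']; ring⟩

def cf (l : List Tm) : ℤ :=
  match l with
  | [] => 0
  | t :: l => (if t.b = 4 ∧ t.g = 2 ∧ t.p = 2 ∧ t.q = 2 ∧ t.r = 2 ∧ t.s = 1 then t.c else 0) + cf l

noncomputable def dd0 : Fin 7 →₀ ℕ := Finsupp.equivFunOnFinite.symm ![4,0,2,2,2,2,1]

lemma ev_mono (t : Tm) :
    ev t = monomial (Finsupp.equivFunOnFinite.symm ![t.b,0,t.g,t.p,t.q,t.r,t.s]) t.c := by
  rw [monomial_eq, Finsupp.prod_fintype _ _ (by simp)]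
  simp [ev, Fin.prod_univ_succ]
  ring

lemma coeff_ev (t : Tm) : coeff dd0 (ev t)
    = if t.b = 4 ∧ t.g = 2 ∧ t.p = 2 ∧ t.q = 2 ∧ t.r = 2 ∧ t.s = 1 then t.c else 0 := by
  rw [ev_mono, coeff_monomial, dd0]
  congr 1
  simp [Matrix.vecCons_inj]

lemma coeff_evl (l : List Tm) : coeff dd0 (evl l) = cf l := by
  induction l with
  | nil => simp [evl, cf]
  | cons a l ih => rw [evl_cons, coeff_add, ih, coeff_ev, cf]

lemma coeff_rel (f : R) (l : List Tm) (h : Rel f l) : coeff dd0 f = cf l := by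
  obtain ⟨r, s, rfl⟩ := h
  have h1 : coeff dd0 (X 1 * r) = 0 := by
    rw [coeff_X_mul', if_neg]; simp [dd0]
  have h2 : coeff dd0 (X 2 ^ 3 * s) = 0 := by
    rw [X_pow_eq_monomial, coeff_monomial_mul', if_neg]
    intro h
    have := h 2
    simp [dd0] at this
  rw [coeff_add, coeff_add, h1, h2, coeff_evl]; simp

def sumO (l : List Tm) (f : Tm → ℤ) : ℤ :=
  match l with
  | [] => 0
  | t :: l => f t + sumO l f

def go (ks : List (Fin 3)) (l : List Tm) : ℤ :=
  match ks with
  | [] => cf l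
  | k :: ks => sumO l fun t => go ks (Tl k [t])

def run (ks : List (Fin 3)) (l : List Tm) : List Tm :=
  match ks with
  | [] => l
  | k :: ks => run ks (Tg k l)

lemma sumO_append (l m : List Tm) (f : Tm → ℤ) : sumO (l ++ m) f = sumO l f + sumO m f := by
  induction l with
  | nil => simp [sumO]
  | cons a l ih => rw [List.cons_append, sumO, ih, sumO]; ring

lemma cf_append (l m : List Tm) : cf (l ++ m) = cf l + cf m := by
  rw [← coeff_evl, evl_append, coeff_add, coeff_evl, coeff_evl]

lemma go_append (ks : List (Fin 3)) (l m : List Tm) : go ks (l ++ m) = go ks l + go ks m := by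
  cases ks with
  | nil => exact cf_append l m
  | cons k ks => exact sumO_append l m _

lemma go_nil (ks : List (Fin 3)) : go ks [] = 0 := by cases ks <;> rfl

lemma go_flat (ks : List (Fin 3)) (l : List Tm) (F : Tm → List Tm) :
    go ks (l.flatMap F) = sumO l fun t => go ks (F t) := by
  induction l with
  | nil => simp [sumO, go_nil]
  | cons a l ih => rw [List.flatMap_cons, go_append, ih, sumO]

lemma run_go (ks : List (Fin 3)) (l : List Tm) : cf (run ks l) = go ks l := by
  induction ks generalizing l with
  | nil => rfl
  | cons k ks ih => rw [run, ih, Tg, go_flat, go]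

lemma calc_go : go [1, 0, 2, 1, 0] [⟨1,0,0,3,2,1,0⟩] = -1 := by
  decide +kernel

lemma calc_cf : cf (Tg 0 (Tg 1 (Tg 2 (Tg 0 (Tg 1 [⟨1,0,0,3,2,1,0⟩]))))) = -1 := by
  rw [← calc_go, ← run_go]; rfl

end Kir


/-- Kirillov's positivity conjecture fails: for the permutation `w = (1 3 2 4)` (in cycle
notation, with reduced word `w = s₁s₂s₃s₁s₂`), the Kirillov polynomial
`KN_w^{(β,α,γ)}(x; 0) = T₁T₂T₃T₁T₂(x₁³x₂²x₃)` has a negative coefficient when viewed in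
`ℤ[β,α,γ,x₁,x₂,x₃,x₄]`.  Here the variables of `MvPolynomial (Fin 7) ℤ` are
`X 0 = β`, `X 1 = α`, `X 2 = γ`, and `X (3+i) = xᵢ₊₁` for `0 ≤ i ≤ 3`; the operator
`T (k)` (for `k = 0, 1, 2`, corresponding to `T_{k+1}`) is
`-β + ((α+β+γ)x_{k+1} + γx_{k+2} + 1 + (β+γ)(α+γ)x_{k+1}x_{k+2})∂_{k+1}`. -/
theorem kirillov_negative_coefficient
    (D T : Fin 3 → (MvPolynomial (Fin 7) ℤ → MvPolynomial (Fin 7) ℤ))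
    (hD : ∀ k : Fin 3, ∀ f,
      (X (3 + Fin.castLE (by norm_num) k + 1) - X (3 + Fin.castLE (by norm_num) k)) * D k f
        = rename (Equiv.swap (3 + Fin.castLE (by norm_num) k)
            (3 + Fin.castLE (by norm_num) k + 1)) f - f)
    (hT : ∀ k : Fin 3, ∀ f, T k f = -X 0 * f +
      ((X 1 + X 0 + X 2) * X (3 + Fin.castLE (by norm_num) k)
        + X 2 * X (3 + Fin.castLE (by norm_num) k + 1) + 1
        + (X 0 + X 2) * (X 1 + X 2) *
            (X (3 + Fin.castLE (by norm_num) k) * X (3 + Fin.castLE (by norm_num) k + 1)))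
        * D k f) :
    (((Equiv.swap (0 : Fin 4) 1) * (Equiv.swap (1 : Fin 4) 2) * (Equiv.swap (2 : Fin 4) 3)
        * (Equiv.swap (0 : Fin 4) 1) * (Equiv.swap (1 : Fin 4) 2)) =
      -- the permutation `w = (1 3 2 4)` in cycle notation, 0-based: 0↦2, 2↦1, 1↦3, 3↦0
      Equiv.swap (0 : Fin 4) 2 * Equiv.swap (2 : Fin 4) 1 * Equiv.swap (1 : Fin 4) 3) ∧
    ∃ d : Fin 7 →₀ ℕ,
      coeff d (T 0 (T 1 (T 2 (T 0 (T 1 (X 3 ^ 3 * X 4 ^ 2 * X 5)))))) < 0 := by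
  refine ⟨by decide, Kir.dd0, ?_⟩
  have st : ∀ (k : Fin 3) f l, Kir.Rel f l → Kir.Rel (T k f) (Kir.Tg k l) := by
    intro k f l hr
    apply Kir.step'
    revert f l
    match k with
    | 0 => exact Kir.step 0 (D 0) (T 0) (hD 0) (hT 0)
    | 1 => exact Kir.step 1 (D 1) (T 1) (hD 1) (hT 1)
    | 2 => exact Kir.step 2 (D 2) (T 2) (hD 2) (hT 2)
  have h0 : Kir.Rel (X 3 ^ 3 * X 4 ^ 2 * X 5) [⟨1,0,0,3,2,1,0⟩] :=
    ⟨0, 0, by simp [Kir.evl, Kir.ev]⟩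
  rw [Kir.coeff_rel _ _ (st 0 _ _ (st 1 _ _ (st 2 _ _ (st 0 _ _ (st 1 _ _ h0))))), Kir.calc_cf]
  norm_num
end
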